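/- arXiv:2302.03179 — 5 statements merged into one kernel-verified Lean document; each statement's English description precedes it below -/
import Mathlib

section
/- The sequence b_n := a_n 2^n / √(nπ) is strictly decreasing in n: for every positive integer n, b_{n+1} < b_n. -/
open Real Filter

/-- Normalizing constant `a_n = 2^n (n!)^2 / (2n)!`. -/
noncomputable def aW (n : ℕ) : ℝ :=
  2 ^ n * (Nat.factorial n : ℝ) ^ 2 / (Nat.factorial (2 * n) : ℝ)

/-- Influence function `I_n(θ) = a_n (1 + cos θ)^n`. -/
noncomputable def influence (n : ℕ) (θ : ℝ) : ℝ := aW n * (1 + Real.cos θ) ^ n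

/-- Sensitivity function `S(θ) = -sin θ`. -/
noncomputable def sens (θ : ℝ) : ℝ := -Real.sin θ

/-!
The ratio `b_{n+1} / b_n` equals `√(n (n + 1)) / (n + 1/2)`, the geometric mean of `n` and `n + 1`
divided by their arithmetic mean, so it is less than `1` by the strict AM-GM inequality.
-/

theorem two_mul_sqrt_mul_sqrt_lt_add {x y : ℝ} (hx : 0 ≤ x) (hy : 0 ≤ y) (hxy : x ≠ y) :
    2 * √x * √y < x + y := by
  have hsqrt : √x - √y ≠ 0 := sub_ne_zero.mpr fun h ↦ hxy ((sqrt_inj hx hy).mp h)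
  have hsq : 0 < (√x - √y) ^ 2 := sq_pos_of_ne_zero hsqrt
  rw [sub_sq, sq_sqrt hx, sq_sqrt hy] at hsq
  linarith

theorem two_mul_sqrt_add_one_div_lt_one_div_sqrt {x : ℝ} (hx : 0 < x) :
    2 * √(x + 1) / (2 * x + 1) < 1 / √x := by
  have hamgm : 2 * √(x + 1) * √x < x + 1 + x :=
    two_mul_sqrt_mul_sqrt_lt_add (by positivity) hx.le (lt_add_one x).ne'
  rw [div_lt_div_iff₀ (by positivity) (by positivity)]
  linarith

theorem aW_eq_two_pow_div_centralBinom (n : ℕ) : aW n = 2 ^ n / n.centralBinom := by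
  rw [aW, Nat.centralBinom_eq_two_mul_choose, Nat.cast_choose ℝ (by lia : n ≤ 2 * n),
    show 2 * n - n = n by lia, div_div_eq_mul_div, sq]

theorem aW_pos (n : ℕ) : 0 < aW n := by
  unfold aW
  positivity

theorem aW_succ (n : ℕ) : aW (n + 1) = aW n * ((n + 1) / (2 * n + 1)) := by
  have hn : (n.centralBinom : ℝ) ≠ 0 := mod_cast n.centralBinom_ne_zero
  have hsucc : ((n + 1).centralBinom : ℝ) ≠ 0 := mod_cast (n + 1).centralBinom_ne_zero
  have hrec : ((n : ℝ) + 1) * (n + 1).centralBinom = 2 * (2 * n + 1) * n.centralBinom :=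
    mod_cast n.succ_mul_centralBinom_succ
  rw [aW_eq_two_pow_div_centralBinom, aW_eq_two_pow_div_centralBinom, div_mul_div_comm,
    div_eq_div_iff hsucc (by positivity)]
  linear_combination -2 ^ n * hrec

/-- The sequence `b_n := a_n 2^n / √(nπ)` is strictly decreasing. -/
theorem stmt1 (n : ℕ) (hn : 0 < n) :
    aW (n + 1) * 2 ^ (n + 1) / Real.sqrt ((n + 1) * Real.pi) <
      aW n * 2 ^ n / Real.sqrt (n * Real.pi) := by
  have hn' : (0 : ℝ) < n := mod_cast hn
  have hpos : 0 < aW n * 2 ^ n / √π := by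
    have := aW_pos n
    positivity
  calc aW (n + 1) * 2 ^ (n + 1) / √((n + 1) * π)
      = aW n * 2 ^ n / √π * (2 * ((n + 1) / √(n + 1)) / (2 * n + 1)) := by
        rw [aW_succ, sqrt_mul (by positivity)]
        ring
    _ = aW n * 2 ^ n / √π * (2 * √(n + 1) / (2 * n + 1)) := by rw [div_sqrt]
    _ < aW n * 2 ^ n / √π * (1 / √n) :=
        mul_lt_mul_of_pos_left (two_mul_sqrt_add_one_div_lt_one_div_sqrt hn') hpos
    _ = aW n * 2 ^ n / √(n * π) := by
        rw [sqrt_mul hn'.le]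
        ring
end

section
/- For every positive integer n, the supremum of |S(θ) I_n(θ)| over θ ∈ ℝ equals a_n · (√(2n+1)/(n+1)) · ((2n+1)/(n+1))^n, i.e. ‖S I_n‖_{L∞(ℝ)} = a_n ((2n+1)/(n+1))^n √(2n+1)/(n+1). -/
open Real Filter

/-!
With `c = cos θ`, the square of `sin θ (1 + cos θ)^n` is `(1 + c)^(2n+1) (1 - c)`. By the weighted
AM-GM inequality this product is largest when `1 + c = (2n+1) (1 - c)`, that is, at
`cos θ = n / (n+1)`.
-/

section WeightedAMGM

variable {K : Type*} [Field K] [LinearOrder K] [IsStrictOrderedRing K]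

theorem pow_mul_le_weighted_mean_pow {a b : K} (ha : 0 ≤ a) (hb : 0 ≤ b) (m : ℕ) :
    a ^ m * b ≤ ((m * a + b) / (m + 1)) ^ (m + 1) := by
  set s := (m * a + b) / (m + 1) with hs
  have hs_nonneg : 0 ≤ s := by positivity
  have hb_eq : b = (m + 1) * s - m * a := by
    rw [hs]
    field_simp
    ring
  calc
    a ^ m * b = a ^ (m + 1) + (m + 1 : ℕ) * a ^ (m + 1 - 1) * (s - a) := by
      rw [hb_eq, Nat.add_sub_cancel]
      push_cast
      ring
    _ ≤ (a + (s - a)) ^ (m + 1) := pow_add_mul_le_add_pow ha (by linarith) (m + 1)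
    _ = s ^ (m + 1) := by rw [add_sub_cancel]

-- Scaling the factor `1 - c` by `m` makes the weighted mean independent of `c`.
theorem one_add_pow_mul_one_sub_le {c : K} (hc : -1 ≤ c) (hc' : c ≤ 1) (m : ℕ) :
    (1 + c) ^ m * (m * (1 - c)) ≤ (2 * m / (m + 1)) ^ (m + 1) := by
  have h := pow_mul_le_weighted_mean_pow (a := 1 + c) (b := m * (1 - c))
    (by linarith) (mul_nonneg m.cast_nonneg (by linarith)) m
  rwa [show m * (1 + c) + m * (1 - c) = 2 * m by ring] at h

end WeightedAMGM

theorem sin_mul_one_add_cos_pow_sq (n : ℕ) (θ : ℝ) :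
    (sin θ * (1 + cos θ) ^ n) ^ 2 = (1 + cos θ) ^ (2 * n + 1) * (1 - cos θ) := by
  rw [mul_pow, sin_sq]
  ring

theorem abs_sin_mul_one_add_cos_pow_le (n : ℕ) (θ : ℝ) :
    |sin θ * (1 + cos θ) ^ n| ≤ ((2 * n + 1) / (n + 1)) ^ n * (√(2 * n + 1) / (n + 1)) := by
  refine abs_le_of_sq_le_sq ?_ (by positivity)
  have hmean : (2 * (2 * n + 1) / (2 * n + 1 + 1) : ℝ) = (2 * n + 1) / (n + 1) := by
    field_simp
    ring
  have hpoly : (1 + cos θ) ^ (2 * n + 1) * ((2 * n + 1) * (1 - cos θ)) ≤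
      ((2 * n + 1) / (n + 1)) ^ (2 * n + 1 + 1) := by
    have h := one_add_pow_mul_one_sub_le (neg_one_le_cos θ) (cos_le_one θ) (2 * n + 1)
    push_cast at h
    rwa [hmean] at h
  calc
    (sin θ * (1 + cos θ) ^ n) ^ 2
        = (1 + cos θ) ^ (2 * n + 1) * ((2 * n + 1) * (1 - cos θ)) / (2 * n + 1) := by
      rw [sin_mul_one_add_cos_pow_sq]
      field_simp
    _ ≤ ((2 * n + 1) / (n + 1)) ^ (2 * n + 1 + 1) / (2 * n + 1) := by gcongr
    _ = (((2 * n + 1) / (n + 1)) ^ n * (√(2 * n + 1) / (n + 1))) ^ 2 := by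
      rw [mul_pow, div_pow (√_), sq_sqrt (by positivity), pow_succ, pow_succ, pow_mul']
      field_simp

theorem sin_arccos_div_add_one {x : ℝ} (hx : 0 ≤ x) :
    sin (arccos (x / (x + 1))) = √(2 * x + 1) / (x + 1) := by
  have hsq : 1 - (x / (x + 1)) ^ 2 = (2 * x + 1) / (x + 1) ^ 2 := by
    field_simp
    ring
  rw [sin_arccos, hsq, sqrt_div' _ (sq_nonneg _), sqrt_sq (by positivity)]

theorem one_add_cos_arccos_div_add_one {x : ℝ} (hx : 0 ≤ x) :
    1 + cos (arccos (x / (x + 1))) = (2 * x + 1) / (x + 1) := by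
  have hnonneg : 0 ≤ x / (x + 1) := by positivity
  have hle : x / (x + 1) ≤ 1 := div_le_one_of_le₀ (by linarith) (by positivity)
  rw [cos_arccos (by linarith) hle]
  field_simp
  ring

theorem isGreatest_range_abs_sin_mul_one_add_cos_pow (n : ℕ) :
    IsGreatest (Set.range fun θ : ℝ ↦ |sin θ * (1 + cos θ) ^ n|)
      (((2 * n + 1) / (n + 1)) ^ n * (√(2 * n + 1) / (n + 1))) := by
  refine ⟨⟨arccos (n / (n + 1)), ?_⟩,
    Set.forall_mem_range.2 (abs_sin_mul_one_add_cos_pow_le n)⟩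
  have hn : (0 : ℝ) ≤ n := n.cast_nonneg
  beta_reduce
  rw [sin_arccos_div_add_one hn, one_add_cos_arccos_div_add_one hn, mul_comm]
  exact abs_of_nonneg (by positivity)

theorem aW_nonneg (n : ℕ) : 0 ≤ aW n := by
  unfold aW
  positivity

theorem abs_sens_mul_influence (n : ℕ) (θ : ℝ) :
    |sens θ * influence n θ| = aW n * |sin θ * (1 + cos θ) ^ n| := by
  rw [sens, influence, mul_left_comm, abs_mul, abs_of_nonneg (aW_nonneg n), neg_mul, abs_neg]

/-- `‖S I_n‖_{L^∞(ℝ)} = a_n ((2n+1)/(n+1))^n √(2n+1)/(n+1)`. -/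
theorem stmt3 (n : ℕ) (hn : 0 < n) :
    (⨆ θ : ℝ, |sens θ * influence n θ|) =
      aW n * ((2 * (n : ℝ) + 1) / ((n : ℝ) + 1)) ^ n *
        Real.sqrt (2 * (n : ℝ) + 1) / ((n : ℝ) + 1) := by
  calc
    (⨆ θ : ℝ, |sens θ * influence n θ|) = ⨆ θ : ℝ, aW n * |sin θ * (1 + cos θ) ^ n| :=
      iSup_congr (abs_sens_mul_influence n)
    _ = aW n * ⨆ θ : ℝ, |sin θ * (1 + cos θ) ^ n| :=
      (Real.mul_iSup_of_nonneg (aW_nonneg n) _).symm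
    _ = aW n * (((2 * n + 1) / (n + 1)) ^ n * (√(2 * n + 1) / (n + 1))) := by
      rw [(isGreatest_range_abs_sin_mul_one_add_cos_pow n).isLUB.ciSup_eq]
    _ = _ := by ring
end

section
/- For every positive integer n, the supremum of |I_n'(θ)| over θ ∈ ℝ equals a_n ((2n-1)/n)^{n-1} √(2n-1), where I_n' denotes the derivative of I_n, i.e. ‖I_n'‖_{L∞(ℝ)} = a_n ((2n-1)/n)^{n-1} √(2n-1). -/
open Real Filter

/-!
The square of `(1 + cos θ)^k sin θ` is `(1 + cos θ)^(2k+1) (1 - cos θ)`, a product of powers of two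
nonnegative quantities with constant sum `2`. Weighted AM-GM, which is Bernoulli's inequality in
homogeneous form, bounds it by `(2k+1)^(2k+1) / (k+1)^(2k+2)`, with equality when
`1 + cos θ = (2k+1) (1 - cos θ)`, i.e. `cos θ = k / (k+1)`.
-/

theorem succ_pow_mul_pow_mul_le_pow_mul_add_pow {R : Type*} [CommRing R] [LinearOrder R]
    [IsStrictOrderedRing R] {x y : R} (hx : 0 ≤ x) (hxy : 0 ≤ x + y) (m : ℕ) :
    (m + 1 : R) ^ (m + 1) * (x ^ m * y) ≤ (m : R) ^ m * (x + y) ^ (m + 1) := by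
  rcases m.eq_zero_or_pos with rfl | hm
  · simpa using hx
  have hm' : (0 : R) < m := Nat.cast_pos.2 hm
  have bernoulli := pow_add_mul_le_add_pow (a := (m + 1) * x) (b := m * y - x) (by positivity)
    (by linear_combination (m + 1 : R) * hx + (m : R) * hxy) (m + 1)
  refine le_of_mul_le_mul_left ?_ hm'
  calc (m : R) * ((m + 1) ^ (m + 1) * (x ^ m * y))
      = ((m + 1) * x) ^ (m + 1)
          + (m + 1 : ℕ) * ((m + 1) * x) ^ (m + 1 - 1) * (m * y - x) := by
        rw [Nat.add_sub_cancel, mul_pow, mul_pow]; push_cast; ring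
    _ ≤ ((m + 1) * x + (m * y - x)) ^ (m + 1) := bernoulli
    _ = m * (m ^ m * (x + y) ^ (m + 1)) := by
        rw [show (m + 1) * x + (m * y - x) = m * (x + y) by ring, mul_pow]; ring

theorem sq_one_add_cos_pow_mul_sin (k : ℕ) (θ : ℝ) :
    ((1 + cos θ) ^ k * sin θ) ^ 2 = (1 + cos θ) ^ (2 * k + 1) * (1 - cos θ) := by
  rw [mul_pow, sin_sq]; ring

theorem sq_one_add_cos_pow_mul_sin_le (k : ℕ) (θ : ℝ) :
    ((1 + cos θ) ^ k * sin θ) ^ 2 ≤ (2 * k + 1) ^ (2 * k + 1) / (k + 1) ^ (2 * k + 2) := by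
  have amgm := succ_pow_mul_pow_mul_le_pow_mul_add_pow (x := 1 + cos θ) (y := 1 - cos θ)
    (by linarith [neg_one_le_cos θ]) (by norm_num) (2 * k + 1)
  rw [sq_one_add_cos_pow_mul_sin, le_div_iff₀' (by positivity)]
  refine le_of_mul_le_mul_left ?_ (show (0 : ℝ) < 2 ^ (2 * k + 2) by positivity)
  calc (2 : ℝ) ^ (2 * k + 2) * ((k + 1) ^ (2 * k + 2) * ((1 + cos θ) ^ (2 * k + 1) * (1 - cos θ)))
      = (((2 * k + 1 : ℕ) : ℝ) + 1) ^ (2 * k + 1 + 1)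
          * ((1 + cos θ) ^ (2 * k + 1) * (1 - cos θ)) := by
        rw [← mul_assoc, ← mul_pow]; push_cast; ring
    _ ≤ ((2 * k + 1 : ℕ) : ℝ) ^ (2 * k + 1)
          * (1 + cos θ + (1 - cos θ)) ^ (2 * k + 1 + 1) := amgm
    _ = 2 ^ (2 * k + 2) * (2 * k + 1) ^ (2 * k + 1) := by
        push_cast; ring

theorem sq_one_add_cos_pow_mul_sin_of_cos_eq {k : ℕ} {θ : ℝ} (hθ : cos θ = k / (k + 1)) :
    ((1 + cos θ) ^ k * sin θ) ^ 2 = (2 * k + 1) ^ (2 * k + 1) / (k + 1) ^ (2 * k + 2) := by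
  have h_add : 1 + cos θ = (2 * k + 1) / (k + 1) := by rw [hθ]; field
  have h_sub : 1 - cos θ = 1 / (k + 1) := by rw [hθ]; field
  rw [sq_one_add_cos_pow_mul_sin, h_add, h_sub, div_pow, div_mul_div_comm, mul_one, ← pow_succ]

theorem isGreatest_range_abs_one_add_cos_pow_mul_sin (k : ℕ) :
    IsGreatest (Set.range fun θ : ℝ ↦ |(1 + cos θ) ^ k * sin θ|)
      ((2 * k + 1) ^ k * √(2 * k + 1) / (k + 1) ^ (k + 1)) := by
  have h_sq : ((2 * k + 1 : ℝ) ^ k * √(2 * k + 1) / (k + 1) ^ (k + 1)) ^ 2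
      = (2 * k + 1) ^ (2 * k + 1) / (k + 1) ^ (2 * k + 2) := by
    rw [div_pow, mul_pow, sq_sqrt (by positivity)]; ring
  constructor
  · obtain ⟨θ, hθ⟩ : ∃ θ : ℝ, cos θ = k / (k + 1) :=
      ⟨arccos (k / (k + 1)), cos_arccos (neg_one_lt_zero.le.trans (by positivity))
        (div_le_one_of_le₀ (by linarith) (by positivity))⟩
    refine ⟨θ, (pow_left_inj₀ (abs_nonneg _) (by positivity) two_ne_zero).1 ?_⟩
    rw [sq_abs, h_sq, sq_one_add_cos_pow_mul_sin_of_cos_eq hθ]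
  · rintro _ ⟨θ, rfl⟩
    exact abs_le_of_sq_le_sq (h_sq ▸ sq_one_add_cos_pow_mul_sin_le k θ) (by positivity)

theorem hasDerivAt_influence (n : ℕ) (θ : ℝ) :
    HasDerivAt (influence n) (-(aW n * n) * ((1 + cos θ) ^ (n - 1) * sin θ)) θ := by
  convert! (((hasDerivAt_cos θ).const_add 1).fun_pow n).const_mul (aW n) using 1
  ring

theorem abs_deriv_influence (n : ℕ) (θ : ℝ) :
    |deriv (influence n) θ| = aW n * n * |(1 + cos θ) ^ (n - 1) * sin θ| := by
  rw [(hasDerivAt_influence n θ).deriv, abs_mul, abs_neg,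
    abs_of_nonneg (mul_nonneg (aW_nonneg n) n.cast_nonneg)]

/-- `‖I_n'‖_{L^∞(ℝ)} = a_n ((2n-1)/n)^(n-1) √(2n-1)`. -/
theorem stmt4 (n : ℕ) (hn : 0 < n) :
    (⨆ θ : ℝ, |deriv (influence n) θ|) =
      aW n * ((2 * (n : ℝ) - 1) / (n : ℝ)) ^ (n - 1) *
        Real.sqrt (2 * (n : ℝ) - 1) := by
  obtain ⟨k, rfl⟩ := Nat.exists_eq_add_one.2 hn
  have h_pred : 2 * ((k + 1 : ℕ) : ℝ) - 1 = 2 * k + 1 := by push_cast; ring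
  calc (⨆ θ : ℝ, |deriv (influence (k + 1)) θ|)
      = ⨆ θ : ℝ, aW (k + 1) * (k + 1 : ℕ) * |(1 + cos θ) ^ k * sin θ| :=
        iSup_congr (abs_deriv_influence (k + 1))
    _ = aW (k + 1) * (k + 1 : ℕ) * ⨆ θ : ℝ, |(1 + cos θ) ^ k * sin θ| :=
        (mul_iSup_of_nonneg (mul_nonneg (aW_nonneg _) (Nat.cast_nonneg _)) _).symm
    _ = aW (k + 1) * (k + 1 : ℕ) * ((2 * k + 1) ^ k * √(2 * k + 1) / (k + 1) ^ (k + 1)) := by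
        rw [(isGreatest_range_abs_one_add_cos_pow_mul_sin k).isLUB.ciSup_eq]
    _ = aW (k + 1) * ((2 * ((k + 1 : ℕ) : ℝ) - 1) / (k + 1 : ℕ)) ^ (k + 1 - 1)
          * √(2 * ((k + 1 : ℕ) : ℝ) - 1) := by
        rw [h_pred, Nat.add_sub_cancel, div_pow]; push_cast; field
end

section
/- (Emergence of incoherence) Let (θ_1,...,θ_N) be a global solution of the Winfree model of order n, and suppose two indices i, j satisfy ν_i > ν_j and the coupling strength satisfies 0 ≤ κ < (ν_i − ν_j)/(2^{n+1} a_n). Then for every t ≥ 0, |θ_i'(t) − θ_j'(t)| ≥ (ν_i − ν_j) − κ 2^{n+1} a_n > 0; in particular inf_{t ≥ 0} |θ_i'(t) − θ_j'(t)| > 0. -/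
open Real Filter

/-- A global solution of the Winfree model of order `n` with `N` oscillators,
natural frequencies `ν` and coupling strength `κ`:
`θ_i'(t) = ν_i + (κ/N) S(θ_i(t)) Σ_j I_n(θ_j(t))` for all `t ≥ 0`. -/
def IsWinfreeSol (n N : ℕ) (ν : Fin N → ℝ) (κ : ℝ) (θ : Fin N → ℝ → ℝ) : Prop :=
  ∀ i : Fin N, ∀ t : ℝ, 0 ≤ t →
    HasDerivAt (θ i)
      (ν i + (κ / N) * sens (θ i t) * ∑ j : Fin N, influence n (θ j t)) t

theorem influence_nonneg (n : ℕ) (x : ℝ) : 0 ≤ influence n x :=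
  mul_nonneg (aW_pos n).le (pow_nonneg (by linarith [neg_one_le_cos x]) n)

theorem influence_le (n : ℕ) (x : ℝ) : influence n x ≤ 2 ^ n * aW n :=
  calc aW n * (1 + cos x) ^ n
    _ ≤ aW n * 2 ^ n := by
      have h_nonneg : 0 ≤ 1 + cos x := by linarith [neg_one_le_cos x]
      have h_le : 1 + cos x ≤ 2 := by linarith [cos_le_one x]
      have := aW_pos n
      gcongr
    _ = 2 ^ n * aW n := mul_comm _ _

theorem abs_sens_le_one (x : ℝ) : |sens x| ≤ 1 :=
  (abs_neg (sin x)).trans_le (abs_sin_le_one x)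

theorem abs_sum_influence_le {ι : Type*} (s : Finset ι) (n : ℕ) (x : ι → ℝ) :
    |∑ k ∈ s, influence n (x k)| ≤ s.card * (2 ^ n * aW n) := by
  rw [abs_of_nonneg (Finset.sum_nonneg fun k _ => influence_nonneg n (x k)), ← nsmul_eq_mul]
  exact Finset.sum_le_card_nsmul s _ _ fun k _ => influence_le n (x k)

namespace IsWinfreeSol

variable {n N : ℕ} {ν : Fin N → ℝ} {κ : ℝ} {θ : Fin N → ℝ → ℝ} {t : ℝ}

theorem abs_deriv_sub_le (hθ : IsWinfreeSol n N ν κ θ) (i : Fin N) (ht : 0 ≤ t) :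
    |deriv (θ i) t - ν i| ≤ |κ| * (2 ^ n * aW n) := by
  have hN : (0 : ℝ) < N := Nat.cast_pos.mpr i.pos
  have h_sum : |∑ k, influence n (θ k t)| ≤ N * (2 ^ n * aW n) := by
    simpa only [Finset.card_fin] using abs_sum_influence_le Finset.univ n (θ · t)
  rw [(hθ i t ht).deriv, add_sub_cancel_left, abs_mul, abs_mul, abs_div, Nat.abs_cast]
  calc |κ| / N * |sens (θ i t)| * |∑ k, influence n (θ k t)|
    _ ≤ |κ| / N * 1 * (N * (2 ^ n * aW n)) := by
      gcongr
      exact abs_sens_le_one (θ i t)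
    _ = |κ| * (2 ^ n * aW n) := by field_simp

theorem sub_le_deriv_sub_deriv (hθ : IsWinfreeSol n N ν κ θ) (i j : Fin N) (ht : 0 ≤ t) :
    (ν i - ν j) - |κ| * 2 ^ (n + 1) * aW n ≤ deriv (θ i) t - deriv (θ j) t := by
  have hi := (abs_le.mp (hθ.abs_deriv_sub_le i ht)).1
  have hj := (abs_le.mp (hθ.abs_deriv_sub_le j ht)).2
  rw [pow_succ]
  linarith

end IsWinfreeSol

theorem stmt7_general {n N : ℕ} {ν : Fin N → ℝ} {κ : ℝ} {θ : Fin N → ℝ → ℝ}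
    (hθ : IsWinfreeSol n N ν κ θ) {i j : Fin N}
    (hκ : |κ| < (ν i - ν j) / (2 ^ (n + 1) * aW n)) :
    0 < (ν i - ν j) - |κ| * 2 ^ (n + 1) * aW n ∧
    ∀ t : ℝ, 0 ≤ t →
      (ν i - ν j) - |κ| * 2 ^ (n + 1) * aW n ≤ deriv (θ i) t - deriv (θ j) t := by
  have ha : 0 < aW n := aW_pos n
  rw [lt_div_iff₀ (by positivity), ← mul_assoc] at hκ
  exact ⟨sub_pos.mpr hκ, fun t ht => hθ.sub_le_deriv_sub_deriv i j ht⟩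

/-- Emergence of incoherence: if `ν_i > ν_j` and `0 ≤ κ < (ν_i − ν_j)/(2^(n+1) a_n)`,
then the frequency gap stays uniformly positive. -/
theorem stmt7 (n N : ℕ) (hn : 0 < n) (hN : 0 < N) (ν : Fin N → ℝ) (κ : ℝ)
    (θ : Fin N → ℝ → ℝ) (hθ : IsWinfreeSol n N ν κ θ)
    (i j : Fin N) (hij : ν j < ν i)
    (hκ0 : 0 ≤ κ) (hκ : κ < (ν i - ν j) / (2 ^ (n + 1) * aW n)) :
    0 < (ν i - ν j) - κ * 2 ^ (n + 1) * aW n ∧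
    ∀ t : ℝ, 0 ≤ t →
      (ν i - ν j) - κ * 2 ^ (n + 1) * aW n ≤ |deriv (θ i) t - deriv (θ j) t| := by
  rw [← abs_of_nonneg hκ0] at hκ ⊢
  exact (stmt7_general hθ hκ).imp_right fun hgap t ht => (hgap t ht).trans (le_abs_self _)
end

section
/- (Existence of a positive-invariant set) Let (θ_1,...,θ_N) be a global solution of the Winfree model of order n with natural frequencies ν_1,...,ν_N and coupling strength κ. Suppose 0 < α < π, κ > (max_i |ν_i|)/(a_n sin α (1 + cos α)^n), and the initial data satisfy |θ_i(0)| < α for every i. Then for every t ≥ 0 and every index i, |θ_i(t)| < α. -/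
open Real Filter

/-! The squares `θ_i ^ 2` cannot cross the level `α ^ 2`. While all phases satisfy `|θ_j| ≤ α`, each
influence `I_n(θ_j)` is at least `I_n(α)`, so at a phase with `|θ_i| = α` the coupling pulls
towards `0` with strength at least `κ sin α I_n(α)`. This exceeds `|ν_i|`, hence `θ_i ^ 2` is
strictly decreasing there. Continuous induction turns this pointwise statement into invariance of
the closed box, and strict decrease at the boundary excludes that a phase ever reaches it. -/

section Barrier

open Set Topology

theorem eventually_nhdsGT_lt_of_hasDerivWithinAt_neg {f : ℝ → ℝ} {f' x : ℝ}
    (hf : HasDerivWithinAt f f' (Ioi x) x) (hf' : f' < 0) : ∀ᶠ y in 𝓝[>] x, f y < f x := by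
  filter_upwards [hf.limsup_slope_le' self_notMem_Ioi hf', self_mem_nhdsWithin] with y hslope hxy
  rw [slope_def_field] at hslope
  exact sub_neg.1 (neg_of_div_neg_left hslope (sub_pos.2 hxy).le)

theorem eventually_nhdsLT_gt_of_hasDerivWithinAt_neg {f : ℝ → ℝ} {f' x : ℝ}
    (hf : HasDerivWithinAt f f' (Iio x) x) (hf' : f' < 0) : ∀ᶠ y in 𝓝[<] x, f x < f y := by
  filter_upwards [hf.limsup_slope_le' self_notMem_Iio hf', self_mem_nhdsWithin] with y hslope hyx
  rw [slope_comm, slope_def_field] at hslope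
  exact sub_neg.1 (neg_of_div_neg_left hslope (sub_pos.2 hyx).le)

variable {ι : Type*} [Finite ι] {f f' : ι → ℝ → ℝ} {c : ι → ℝ} {a : ℝ}

theorem forall_le_of_hasDerivWithinAt_Ioi_neg_of_eq
    (hcont : ∀ i, ContinuousOn (f i) (Ici a))
    (hderiv : ∀ i, ∀ t ≥ a, HasDerivWithinAt (f i) (f' i t) (Ioi t) t)
    (hneg : ∀ t ≥ a, (∀ j, f j t ≤ c j) → ∀ i, f i t = c i → f' i t < 0)
    (hinit : ∀ i, f i a ≤ c i) : ∀ t ≥ a, ∀ i, f i t ≤ c i := by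
  intro b hb
  let s : Set ℝ := {t | ∀ i, f i t ≤ c i}
  have hclosed : IsClosed (s ∩ Icc a b) := by
    have hs : s ∩ Icc a b = Icc a b ∩ (fun t i ↦ f i t) ⁻¹' Iic c := by
      rw [inter_comm]; rfl
    rw [hs]
    have hcontIcc : ContinuousOn (fun t i ↦ f i t) (Icc a b) :=
      continuousOn_pi.2 fun i ↦ (hcont i).mono Icc_subset_Ici_self
    exact hcontIcc.preimage_isClosed_of_isClosed isClosed_Icc isClosed_Iic
  refine hclosed.Icc_subset_of_forall_mem_nhdsWithin hinit ?_ (right_mem_Icc.2 hb)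
  rintro t ⟨hts, hat, -⟩
  refine eventually_all.2 fun i ↦ ?_
  rcases (hts i).lt_or_eq with hlt | heq
  · have hright : ContinuousWithinAt (f i) (Ioi t) t := (hderiv i t hat).continuousWithinAt
    exact (hright.eventually_lt_const hlt).mono fun _ ↦ le_of_lt
  · exact (eventually_nhdsGT_lt_of_hasDerivWithinAt_neg (hderiv i t hat)
      (hneg t hat hts i heq)).mono fun _ h ↦ heq ▸ h.le

theorem forall_lt_of_hasDerivWithinAt_neg_of_eq
    (hderiv : ∀ i, ∀ t ≥ a, HasDerivWithinAt (f i) (f' i t) (Ici a) t)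
    (hneg : ∀ t ≥ a, (∀ j, f j t ≤ c j) → ∀ i, f i t = c i → f' i t < 0)
    (hinit : ∀ i, f i a < c i) : ∀ t ≥ a, ∀ i, f i t < c i := by
  have hle : ∀ t ≥ a, ∀ i, f i t ≤ c i :=
    forall_le_of_hasDerivWithinAt_Ioi_neg_of_eq
      (fun i t ht ↦ (hderiv i t ht).continuousWithinAt)
      (fun i t ht ↦ (hderiv i t ht).mono ((Ioi_subset_Ioi ht).trans Ioi_subset_Ici_self))
      hneg fun i ↦ (hinit i).le
  intro t ht i
  refine (hle t ht i).lt_of_ne fun heq ↦ ?_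
  have hat : a < t := ht.lt_of_ne fun h ↦ (hinit i).ne (h ▸ heq)
  have hleft : HasDerivWithinAt (f i) (f' i t) (Iio t) t :=
    ((hderiv i t ht).hasDerivAt (Ici_mem_nhds hat)).hasDerivWithinAt
  obtain ⟨u, hgt, hau⟩ := ((eventually_nhdsLT_gt_of_hasDerivWithinAt_neg hleft
    (hneg t ht (hle t ht) i heq)).and (Ico_mem_nhdsLT hat)).exists
  exact hgt.not_ge (heq ▸ hle u hau.1 i)

end Barrier

theorem abs_lt_mul_of_iSup_abs_div_lt {ι : Type*} [Finite ι] {ν : ι → ℝ} {D κ : ℝ} (hD : 0 < D)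
    (h : (⨆ i, |ν i|) / D < κ) (i : ι) : |ν i| < κ * D :=
  (Finite.le_ciSup (fun i ↦ |ν i|) i).trans_lt ((div_lt_iff₀ hD).1 h)

theorem mul_sin_eq_mul_sin_of_abs_eq_abs {x y : ℝ} (h : |x| = |y|) : x * sin x = y * sin y := by
  rcases abs_eq_abs.1 h with rfl | rfl <;> simp

theorem one_add_cos_pos {x : ℝ} (hx : |x| < π) : 0 < 1 + cos x := by
  have h : cos π < cos |x| := cos_lt_cos_of_nonneg_of_le_pi (abs_nonneg x) le_rfl hx
  rw [cos_pi, cos_abs] at h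
  linarith

theorem influence_pos (n : ℕ) {x : ℝ} (hx : |x| < π) : 0 < influence n x :=
  mul_pos (aW_pos n) (pow_pos (one_add_cos_pos hx) n)

theorem influence_le_influence_of_abs_le (n : ℕ) {x y : ℝ} (hxy : |x| ≤ |y|) (hy : |y| ≤ π) :
    influence n y ≤ influence n x := by
  have hcos : cos y ≤ cos x := by
    simpa only [cos_abs] using cos_le_cos_of_nonneg_of_le_pi (abs_nonneg x) hy hxy
  have hbase : 0 ≤ 1 + cos y := by linarith [neg_one_le_cos y]
  exact mul_le_mul_of_nonneg_left (pow_le_pow_left₀ hbase (by linarith) n) (aW_pos n).le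

section Winfree

variable {n N : ℕ} {ν : Fin N → ℝ} {κ α : ℝ}

/-- The vector field of the Winfree model on phase space: its `i`-th component at the
configuration `x` is the velocity of the `i`-th oscillator. -/
noncomputable def winfreeField (n : ℕ) {N : ℕ} (ν : Fin N → ℝ) (κ : ℝ) (x : Fin N → ℝ)
    (i : Fin N) : ℝ :=
  ν i + (κ / N) * sens (x i) * ∑ j : Fin N, influence n (x j)

theorem mul_winfreeField_neg {x : Fin N → ℝ} {i : Fin N} (hα0 : 0 < α) (hαπ : α ≤ π)
    (hν : |ν i| < κ * (sin α * influence n α)) (hx : ∀ j, |x j| ≤ α) (hxi : |x i| = α) :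
    x i * winfreeField n ν κ x i < 0 := by
  have hN : (0 : ℝ) < N := Nat.cast_pos.2 i.pos
  have habs : |α| = α := abs_of_pos hα0
  have hκsin : 0 ≤ κ * sin α := by
    have hpos : 0 < κ * sin α * influence n α := by
      rw [mul_assoc]
      exact (abs_nonneg _).trans_lt hν
    exact (pos_of_mul_pos_left hpos (influence_nonneg n α)).le
  have hsum : N * influence n α ≤ ∑ j, influence n (x j) := by
    simpa using Finset.card_nsmul_le_sum Finset.univ (fun j ↦ influence n (x j)) _
      fun j _ ↦ influence_le_influence_of_abs_le n ((hx j).trans_eq habs.symm) (habs.trans_le hαπ)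
  have hsin : x i * sin (x i) = α * sin α :=
    mul_sin_eq_mul_sin_of_abs_eq_abs (hxi.trans habs.symm)
  have hdrift : x i * ν i ≤ α * |ν i| := by
    simpa only [abs_mul, hxi] using le_abs_self (x i * ν i)
  calc x i * winfreeField n ν κ x i
      = x i * ν i - κ / N * (x i * sin (x i)) * ∑ j, influence n (x j) := by
        rw [winfreeField, sens]; ring
    _ = x i * ν i - α * (κ * sin α / N * ∑ j, influence n (x j)) := by rw [hsin]; ring
    _ ≤ α * |ν i| - α * (κ * sin α / N * (N * influence n α)) := by gcongr
    _ = α * (|ν i| - κ * (sin α * influence n α)) := by field_simp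
    _ < 0 := mul_neg_of_pos_of_neg hα0 (sub_neg.2 hν)

theorem IsWinfreeSol.abs_lt {θ : Fin N → ℝ → ℝ} (hθ : IsWinfreeSol n N ν κ θ) (hα0 : 0 < α)
    (hαπ : α ≤ π) (hν : ∀ i, |ν i| < κ * (sin α * influence n α)) (hinit : ∀ i, |θ i 0| < α) :
    ∀ t ≥ 0, ∀ i, |θ i t| < α := by
  have hderiv : ∀ i, ∀ t ≥ 0, HasDerivWithinAt (fun t ↦ θ i t ^ 2)
      (2 * (θ i t * winfreeField n ν κ (θ · t) i)) (Set.Ici 0) t := fun i t ht ↦ by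
    have hfield : HasDerivAt (θ i) (winfreeField n ν κ (θ · t) i) t := hθ i t ht
    simpa [mul_assoc] using (hfield.fun_pow 2).hasDerivWithinAt
  have hsq : ∀ t ≥ 0, ∀ i, θ i t ^ 2 < α ^ 2 := by
    refine forall_lt_of_hasDerivWithinAt_neg_of_eq hderiv (fun t _ hle i heq ↦ ?_)
      fun i ↦ sq_lt_sq.2 ((hinit i).trans_eq (abs_of_pos hα0).symm)
    have hxi : |θ i t| = α := ((sq_eq_sq_iff_abs_eq_abs _ _).1 heq).trans (abs_of_pos hα0)
    exact mul_neg_of_pos_of_neg two_pos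
      (mul_winfreeField_neg hα0 hαπ (hν i) (fun j ↦ abs_le_of_sq_le_sq (hle j) hα0.le) hxi)
  exact fun t ht i ↦ abs_lt_of_sq_lt_sq (hsq t ht i) hα0.le

end Winfree

/-- Existence of a positive-invariant set: if `0 < α < π`, the coupling is large,
`κ > (max_i |ν_i|)/(a_n sin α (1 + cos α)^n)`, and `|θ_i(0)| < α` for all `i`,
then `|θ_i(t)| < α` for all `t ≥ 0`. -/
theorem stmt8 (n N : ℕ) (hn : 0 < n) [NeZero N] (ν : Fin N → ℝ) (κ : ℝ)
    (θ : Fin N → ℝ → ℝ) (hθ : IsWinfreeSol n N ν κ θ)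
    (α : ℝ) (hα0 : 0 < α) (hαπ : α < Real.pi)
    (hκ : (⨆ i : Fin N, |ν i|) / (aW n * Real.sin α * (1 + Real.cos α) ^ n) < κ)
    (hinit : ∀ i : Fin N, |θ i 0| < α) :
    ∀ t : ℝ, 0 ≤ t → ∀ i : Fin N, |θ i t| < α := by
  have hpull : 0 < sin α * influence n α :=
    mul_pos (sin_pos_of_pos_of_lt_pi hα0 hαπ) (influence_pos n ((abs_of_pos hα0).trans_lt hαπ))
  have hden : aW n * sin α * (1 + cos α) ^ n = sin α * influence n α := by
    rw [influence]; ring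
  rw [hden] at hκ
  exact hθ.abs_lt hα0 hαπ.le (abs_lt_mul_of_iSup_abs_div_lt hpull hκ) hinit
end
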